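/- arXiv:2402.03425 — 2 statements merged into one kernel-verified Lean document; each statement's English description precedes it below -/
import Mathlib

section
/- (Existence of a distinguishing operator, finite dimension) Let d ≥ 1, let x and y be unit vectors in ℂ^d, and let α ∈ [0,1] be such that |⟨x,y⟩|² ≤ 1 − α. Then there exists a self-adjoint d×d complex matrix Q with ‖Q‖_op ≤ 1 such that |⟨x, Qx⟩ − ⟨y, Qy⟩| ≥ 2α. -/
/-!
The operator is the reflection `R = 2 |x⟩⟨x| - 1` fixing the line `ℂ x` and negating its orthogonal
complement. It is a self-adjoint isometry with `⟨x, R x⟩ = 1` and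
`⟨y, R y⟩ = 2 |⟨x, y⟩|² - 1`, so the difference is `2 (1 - |⟨x, y⟩|²) ≥ 2 α`.
-/

open Matrix
open scoped ComplexInnerProductSpace

/-- The operator norm of a square complex matrix, i.e. the norm of the induced
linear map on the corresponding Euclidean (ℓ²) space. -/
noncomputable def opNorm {n : Type*} [Fintype n] [DecidableEq n] (M : Matrix n n ℂ) : ℝ :=
  ‖LinearMap.toContinuousLinearMap (Matrix.toEuclideanLin M)‖

/-- Existence of a distinguishing operator in finite dimension: if unit vectors `x, y` have
fidelity `|⟨x,y⟩|² ≤ 1 − α`, then there is a self-adjoint contraction `Q` with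
`|⟨x, Qx⟩ − ⟨y, Qy⟩| ≥ 2α`. -/
theorem stmt_8 (d : ℕ) (hd : 1 ≤ d)
    (x y : EuclideanSpace ℂ (Fin d)) (hx : ‖x‖ = 1) (hy : ‖y‖ = 1)
    (α : ℝ) (hα : α ∈ Set.Icc (0 : ℝ) 1)
    (hfid : ‖⟪x, y⟫‖ ^ 2 ≤ 1 - α) :
    ∃ Q : Matrix (Fin d) (Fin d) ℂ, Q.IsHermitian ∧ opNorm Q ≤ 1 ∧
      2 * α ≤ ‖⟪x, Matrix.toEuclideanLin Q x⟫ - ⟪y, Matrix.toEuclideanLin Q y⟫‖ := by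
  let R := (ℂ ∙ x).reflection
  have hR : ∀ z, R z = (2 : ℂ) • (⟪x, z⟫ • x) - z := by
    intro z
    simp only [R, Submodule.reflection_apply, Submodule.starProjection_unit_singleton ℂ hx,
      two_smul]
  have hxx : ⟪x, x⟫ = (1 : ℂ) := by simp [inner_self_eq_norm_sq_to_K, hx]
  have hyy : ⟪y, y⟫ = (1 : ℂ) := by simp [inner_self_eq_norm_sq_to_K, hy]
  have hxy : ⟪x, y⟫ * ⟪y, x⟫ = ((‖⟪x, y⟫‖ ^ 2 : ℝ) : ℂ) := by
    rw [← inner_conj_symm y x, Complex.mul_conj, Complex.normSq_eq_norm_sq]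
  let L : EuclideanSpace ℂ (Fin d) →ₗ[ℂ] EuclideanSpace ℂ (Fin d) :=
    R.toLinearEquiv.toLinearMap
  have hL : ∀ z, L z = R z := fun _ => rfl
  refine ⟨Matrix.toEuclideanLin.symm L, ?_, ?_, ?_⟩
  · rw [← Matrix.isSymmetric_toEuclideanLin_iff, LinearEquiv.apply_symm_apply]
    intro u v
    simp only [hL, hR, inner_sub_left, inner_sub_right, inner_smul_left, inner_smul_right,
      inner_conj_symm, map_ofNat]
    ring
  · rw [opNorm, LinearEquiv.apply_symm_apply]
    refine ContinuousLinearMap.opNorm_le_bound _ zero_le_one fun z => ?_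
    simp [hL]
  · rw [LinearEquiv.apply_symm_apply]
    have h : ⟪x, L x⟫ - ⟪y, L y⟫ = ((2 - 2 * ‖⟪x, y⟫‖ ^ 2 : ℝ) : ℂ) := by
      simp only [hL, hR, inner_sub_right, inner_smul_right, hxx, hyy, hxy]
      push_cast
      ring
    rw [h, Complex.norm_real]
    exact le_trans (by linarith) (le_abs_self _)
end

section
/- (Distinguishing operator in the limit) Let H be a complex Hilbert space and let α ∈ [0,1]. Let (ξ_n) and (ξ̂_n) be sequences of unit vectors in H converging in norm to ξ and ξ̂ respectively, and let (η_n) be a sequence of real numbers with η_n → 0 such that |⟨ξ_n, ξ̂_n⟩|² ≤ 1 − α + η_n for every n. Then |⟨ξ, ξ̂⟩|² ≤ 1 − α, and there exists a continuous linear self-adjoint operator Q on H with operator norm ‖Q‖ ≤ 1 such that |⟨ξ, Q ξ⟩ − ⟨ξ̂, Q ξ̂⟩| ≥ 2α. -/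
/-!
The fidelity bound passes to the limit because the inner product is continuous.
For `Q` take the reflection of `H` in the line `ℂ ∙ ξ`, that is `Q = 2P - 1` with `P` the
orthogonal projection onto that line. It is a self-adjoint isometry, `⟪ξ, Q ξ⟫ = 1`, and
`⟪ξhat, Q ξhat⟫ = 2F - 1` where `F` is the fidelity of `ξ` and `ξhat`. The two expectations
therefore differ by `2 (1 - F) ≥ 2α`.
-/

open scoped ComplexInnerProductSpace

/-- Distinguishing operator in the limit: if unit vectors `ξ_n → ξ` and `ξ̂_n → ξ̂` in a
complex Hilbert space satisfy `|⟨ξ_n, ξ̂_n⟩|² ≤ 1 − α + η_n` with `η_n → 0`, then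
`|⟨ξ, ξ̂⟩|² ≤ 1 − α` and there is a self-adjoint bounded operator `Q` of norm at most one
with `|⟨ξ, Qξ⟩ − ⟨ξ̂, Qξ̂⟩| ≥ 2α`. -/
theorem stmt_9 (H : Type*) [NormedAddCommGroup H] [InnerProductSpace ℂ H] [CompleteSpace H]
    (α : ℝ) (hα : α ∈ Set.Icc (0 : ℝ) 1)
    (ξseq ξhatseq : ℕ → H)
    (hξseq_unit : ∀ n, ‖ξseq n‖ = 1) (hξhatseq_unit : ∀ n, ‖ξhatseq n‖ = 1)
    (ξ ξhat : H)
    (hξ_lim : Filter.Tendsto ξseq Filter.atTop (nhds ξ))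
    (hξhat_lim : Filter.Tendsto ξhatseq Filter.atTop (nhds ξhat))
    (η : ℕ → ℝ) (hη : Filter.Tendsto η Filter.atTop (nhds 0))
    (hfid : ∀ n, ‖⟪ξseq n, ξhatseq n⟫‖ ^ 2 ≤ 1 - α + η n) :
    ‖⟪ξ, ξhat⟫‖ ^ 2 ≤ 1 - α ∧
    ∃ Q : H →L[ℂ] H, (∀ u v : H, ⟪u, Q v⟫ = ⟪Q u, v⟫) ∧ ‖Q‖ ≤ 1 ∧
      2 * α ≤ ‖⟪ξ, Q ξ⟫ - ⟪ξhat, Q ξhat⟫‖ := by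
  have hξ : ‖ξ‖ = 1 :=
    tendsto_nhds_unique hξ_lim.norm (by simp [hξseq_unit])
  have hξhat : ‖ξhat‖ = 1 :=
    tendsto_nhds_unique hξhat_lim.norm (by simp [hξhatseq_unit])
  have hF : ‖⟪ξ, ξhat⟫‖ ^ 2 ≤ 1 - α := by
    have hη' : Filter.Tendsto (fun n => 1 - α + η n) Filter.atTop (nhds (1 - α)) := by
      simpa using hη.const_add (1 - α)
    exact le_of_tendsto_of_tendsto' ((hξ_lim.inner hξhat_lim).norm.pow 2) hη' hfid
  refine ⟨hF, ((ℂ ∙ ξ).reflection.toLinearIsometry.toContinuousLinearMap), ?_,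
    LinearIsometry.norm_toContinuousLinearMap_le _, ?_⟩
  · intro u v
    simp [Submodule.reflection_apply, two_smul,
      Submodule.inner_starProjection_left_eq_right]
  · have h1 : ⟪ξ, (ℂ ∙ ξ).reflection ξ⟫ = 1 := by
      rw [Submodule.reflection_mem_subspace_eq_self (Submodule.mem_span_singleton_self ξ),
        inner_self_eq_norm_sq_to_K, hξ]
      simp
    have h2 : ⟪ξhat, (ℂ ∙ ξ).reflection ξhat⟫ = ((2 * ‖⟪ξ, ξhat⟫‖ ^ 2 - 1 : ℝ) : ℂ) := by
      rw [Submodule.reflection_apply, Submodule.starProjection_unit_singleton ℂ hξ, two_smul,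
        inner_sub_right, inner_add_right, inner_smul_right, inner_self_eq_norm_sq_to_K, hξhat,
        RCLike.ofReal_one,
        ← inner_conj_symm ξhat ξ, Complex.mul_conj']
      push_cast
      ring
    have h3 : ⟪ξ, (ℂ ∙ ξ).reflection ξ⟫ - ⟪ξhat, (ℂ ∙ ξ).reflection ξhat⟫
        = ((2 * (1 - ‖⟪ξ, ξhat⟫‖ ^ 2) : ℝ) : ℂ) := by
      rw [h1, h2]
      push_cast
      ring
    change 2 * α ≤ ‖⟪ξ, (ℂ ∙ ξ).reflection ξ⟫ - ⟪ξhat, (ℂ ∙ ξ).reflection ξhat⟫‖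
    rw [h3, Complex.norm_real, Real.norm_eq_abs]
    exact le_trans (by linarith) (le_abs_self _)
end
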